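/- arXiv:2512.00337 — 2 statements merged into one kernel-verified Lean document; each statement's English description precedes it below -/
import Mathlib

section
/- Let K = ℚ(√d₁, √d₂) be a biquadratic field with d₁, d₂ odd squarefree, and let G ⊆ ℂ be the field G = ℚ(√(p*) : p prime dividing d₁d₂) if d₁ ≡ d₂ ≡ 1 (mod 4), and G = ℚ({√(p*) : p prime dividing d₁d₂} ∪ {√−1}) otherwise, where p* = (−1)^{(p−1)/2} p. Then the degree of G over K equals 2^{ω(|Δ_K|) − 2}, where Δ_K is the discriminant of K and ω(m) denotes the number of distinct prime divisors of m. -/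
open IntermediateField NumberField
noncomputable section
def biquad (d₁ d₂ : ℤ) : IntermediateField ℚ ℂ :=
  IntermediateField.adjoin ℚ {x : ℂ | x ^ 2 = (d₁ : ℂ) ∨ x ^ 2 = (d₂ : ℂ)}
def genusGens (d₁ d₂ : ℤ) : Set ℂ :=
  {x : ℂ | ∃ p : ℕ, p.Prime ∧ (p : ℤ) ∣ d₁ * d₂ ∧
    x ^ 2 = (-1 : ℂ) ^ ((p - 1) / 2) * (p : ℂ)}
def genusField (d₁ d₂ : ℤ) : IntermediateField ℚ ℂ :=
  if d₁ % 4 = 1 ∧ d₂ % 4 = 1 then IntermediateField.adjoin ℚ (genusGens d₁ d₂)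
  else IntermediateField.adjoin ℚ (genusGens d₁ d₂ ∪ {x : ℂ | x ^ 2 = -1})

/-!
A prime `p` ramifies in a multiquadratic field if and only if it divides the discriminant `D` of one
of the quadratic fields `ℚ(√d)` generating it. If `p` divides none of these discriminants, then the
inertia groups at `p` are trivial: an inertia element `σ` with `σ √D = -√D` would move the integer
`(D + √D) / 2` by `-√D`, forcing `√D`, hence `D`, into a prime above `p`.

Put `p* = -1` for `p = 2`. Then `√p*` generates a quadratic field ramified at `p` only, so adjoining
it to a multiquadratic field unramified at `p` doubles the degree, and the field generated by `√p*`
for `p` in a finite set `s` has degree `2 ^ #s`. The field `G` is the one whose set `s` consists of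
the primes ramified in `K`, and it contains `K` because every odd squarefree `d` is the product of
the `p*` over the primes `p` ramified in `ℚ(√d)`. The tower law concludes.
-/

open Polynomial (X C map_X map_C C_pow monic_X_pow_sub_C Splits)

/-- The discriminant of the field `ℚ(√d)`, for a squarefree integer `d`. -/
def quadDiscr (d : ℤ) : ℤ := if d % 4 = 1 then d else 4 * d

lemma exists_ringOfIntegers_sq_eq {K : Type*} [Field K] {d : ℤ} {α : K} (hα : α ^ 2 = d) :
    ∃ a : 𝓞 K, a ^ 2 = d ∧ (a : K) = α := by
  have hint : IsIntegral ℤ α := .of_pow two_pos (hα ▸ isIntegral_algebraMap (x := d))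
  exact ⟨⟨α, hint⟩, RingOfIntegers.coe_injective hα, rfl⟩

section Ramified

variable {K : Type*} [Field K] [NumberField K] {p d : ℤ}

lemma dvd_discr_of_mem_span_sq (hp : Prime p) {a : 𝓞 K} (hpa : (p : 𝓞 K) ∣ a ^ 2)
    (hap : (p : 𝓞 K) ∈ Ideal.span {a ^ 2, (p : 𝓞 K) ^ 2}) : p ∣ discr K := by
  have : (Ideal.span {p}).IsMaximal :=
    PrincipalIdealRing.isMaximal_of_irreducible hp.irreducible
  obtain ⟨P, hPmax, hPp⟩ :=
    Ideal.exists_maximal_ideal_liesOver_of_isIntegral (S := 𝓞 K) (Ideal.span {p})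
  have hpP : (p : 𝓞 K) ∈ P := (Ideal.liesOver_span_iff hPmax.ne_top hp).1 hPp
  have haP : a ∈ P := hPmax.isPrime.mem_of_pow_mem 2 (P.mem_of_dvd hpa hpP)
  have hpP2 : (p : 𝓞 K) ∈ P ^ 2 := by
    refine (Ideal.span_le.2 ?_ : Ideal.span {a ^ 2, (p : 𝓞 K) ^ 2} ≤ P ^ 2) hap
    exact Set.pair_subset (Ideal.pow_mem_pow haP 2) (Ideal.pow_mem_pow hpP 2)
  have hdiff : P ^ (2 - 1) ∣ differentIdeal ℤ (𝓞 K) := by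
    refine pow_sub_one_dvd_differentIdeal ℤ (p := Ideal.span {p}) P 2 (by simp [hp.ne_zero]) ?_
    rw [Ideal.dvd_iff_le, Ideal.map_span, Set.image_singleton, Ideal.span_singleton_le_iff_mem]
    simpa only [algebraMap_int_eq, eq_intCast] using hpP2
  by_contra hndvd
  exact not_dvd_differentIdeal_iff.2
    ((not_dvd_discr_iff_forall_mem K (𝓞 K) hp).1 hndvd P hPmax.isPrime hpP)
    ((pow_one P).symm ▸ hdiff)

lemma dvd_discr_of_sq_eq_of_dvd (hp : Prime p) (hd : Squarefree d) (hpd : p ∣ d) {a : 𝓞 K}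
    (ha : a ^ 2 = d) : p ∣ discr K := by
  obtain ⟨m, rfl⟩ := hpd
  have hndvd : ¬ p ∣ m := by
    rintro ⟨k, rfl⟩
    exact hp.not_isUnit (hd p ⟨k, by ring⟩)
  obtain ⟨u, v, huv⟩ := hp.coprime_iff_not_dvd.2 hndvd
  refine dvd_discr_of_mem_span_sq hp (a := a) ⟨m, by rw [ha]; push_cast; rfl⟩ ?_
  refine Ideal.mem_span_pair.2 ⟨v, u, ?_⟩
  rw [ha]
  exact_mod_cast (by linear_combination p * huv : v * (p * m) + u * p ^ 2 = p)

lemma two_dvd_discr_of_sq_eq (hd : d % 4 = 3) {a : 𝓞 K} (ha : a ^ 2 = d) : 2 ∣ discr K := by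
  obtain ⟨m, rfl⟩ : ∃ m, d = 4 * m + 3 := ⟨d / 4, by omega⟩
  push_cast at ha
  -- `(1 + √d) ^ 2 = 2 * (2 * m + 2 + √d)`, where the second factor is a unit modulo `2`.
  refine dvd_discr_of_mem_span_sq Int.prime_two (a := 1 + a) ⟨2 * m + 2 + a, ?_⟩ ?_
  · push_cast
    linear_combination ha
  · refine Ideal.mem_span_pair.2 ⟨-a, (m + 1) * (2 + a), ?_⟩
    push_cast
    linear_combination (-2 - a) * ha

theorem dvd_discr_of_dvd_quadDiscr (hp : Prime p) (hd : Squarefree d) (hpd : p ∣ quadDiscr d)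
    {α : K} (hα : α ^ 2 = d) : p ∣ discr K := by
  obtain ⟨a, ha, -⟩ := exists_ringOfIntegers_sq_eq hα
  by_cases hdvd : p ∣ d
  · exact dvd_discr_of_sq_eq_of_dvd hp hd hdvd ha
  have hmod : ¬ d % 4 = 1 := fun h ↦ hdvd (by rwa [quadDiscr, if_pos h] at hpd)
  rw [quadDiscr, if_neg hmod] at hpd
  have hp2 : p ∣ 2 :=
    hp.dvd_of_dvd_pow (n := 2) (by simpa using (hp.dvd_or_dvd hpd).resolve_right hdvd)
  have hassoc : Associated p 2 := hp.associated_of_dvd Int.prime_two hp2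
  rw [hassoc.dvd_iff_dvd_left] at hdvd ⊢
  exact two_dvd_discr_of_sq_eq (by omega) ha

end Ramified

section Multiquadratic

/-- The multiquadratic field obtained from `ℚ` by adjoining both square roots of every integer
of `T`. -/
def multiquadratic (T : Set ℤ) : IntermediateField ℚ ℂ :=
  adjoin ℚ {x | ∃ d ∈ T, x ^ 2 = (d : ℂ)}

variable {T : Set ℤ} {F : IntermediateField ℚ ℂ}

lemma mem_multiquadratic {d : ℤ} {x : ℂ} (hd : d ∈ T) (hx : x ^ 2 = d) : x ∈ multiquadratic T :=
  subset_adjoin ℚ _ ⟨d, hd, hx⟩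

lemma multiquadratic_le_iff :
    multiquadratic T ≤ F ↔ ∀ d ∈ T, ∀ x : ℂ, x ^ 2 = d → x ∈ F :=
  adjoin_le_iff.trans ⟨fun h d hd _ hx ↦ h ⟨d, hd, hx⟩, fun h _ ⟨_, hd, hx⟩ ↦ h _ hd _ hx⟩

instance isGalois_multiquadratic (T : Set ℤ) : IsGalois ℚ (multiquadratic T) := by
  have hsplits : ∀ x ∈ {x : ℂ | ∃ d ∈ T, x ^ 2 = (d : ℂ)}, IsIntegral ℚ x ∧
      ((minpoly ℚ x).map (algebraMap ℚ (multiquadratic T))).Splits := by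
    rintro x ⟨d, hdT, hd⟩
    have hroot : Polynomial.aeval x (X ^ 2 - C (d : ℚ)) = 0 := by simp [hd]
    refine ⟨⟨_, monic_X_pow_sub_C _ two_ne_zero, hroot⟩, ?_⟩
    let y : multiquadratic T := ⟨x, mem_multiquadratic hdT hd⟩
    have hy : y ^ 2 = d := Subtype.ext hd
    have hfactor : (X ^ 2 - C (d : ℚ)).map (algebraMap ℚ (multiquadratic T)) =
        (X - C y) * (X + C y) := by
      rw [Polynomial.map_sub, Polynomial.map_pow, map_X, map_C, map_intCast, ← hy, C_pow]
      ring
    refine Splits.of_dvd (g := (X ^ 2 - C (d : ℚ)).map (algebraMap ℚ (multiquadratic T))) ?_ ?_ ?_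
    · rw [hfactor]; exact (Splits.X_sub_C _).mul (Splits.X_add_C _)
    · exact ((monic_X_pow_sub_C (d : ℚ) two_ne_zero).map _).ne_zero
    · exact Polynomial.map_dvd _ (minpoly.dvd ℚ x hroot)
  have : Algebra.IsAlgebraic ℚ (multiquadratic T) := isAlgebraic_adjoin fun x hx ↦ (hsplits x hx).1
  have : Normal ℚ (multiquadratic T) := normal_iff.2 fun x ↦
    ⟨Algebra.IsIntegral.isIntegral x, by
      have hx := splits_of_mem_adjoin ℚ ℂ hsplits x.2
      rwa [← IntermediateField.minpoly_eq x] at hx⟩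
  exact ⟨⟩

end Multiquadratic

section Unramified

variable {K : Type*} [Field K] [CharZero K]

lemma two_dvd_add_one_of_sq_eq {d : ℤ} (hd : d % 4 = 1) {a : 𝓞 K} (ha : a ^ 2 = d) :
    2 ∣ a + 1 := by
  obtain ⟨k, rfl⟩ : ∃ k, d = 4 * k + 1 := ⟨d / 4, by omega⟩
  have haK : (a : K) ^ 2 = 4 * k + 1 := by
    simpa [map_ofNat] using congr_arg (algebraMap (𝓞 K) K) ha
  have hroot : (((a : K) + 1) / 2) ^ 2 - ((a : K) + 1) / 2 - k = 0 := by
    linear_combination haK / 4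
  have hint : IsIntegral ℤ (((a : K) + 1) / 2) := by
    refine ⟨X ^ 2 - X - C k, by monicity!, ?_⟩
    rwa [← Polynomial.aeval_def, map_sub, map_sub, map_pow, Polynomial.aeval_X,
      Polynomial.aeval_C]
  refine ⟨⟨_, hint⟩, RingOfIntegers.coe_injective ?_⟩
  exact (mul_div_cancel₀ ((a : K) + 1) two_ne_zero).symm

lemma exists_sq_eq_quadDiscr {d : ℤ} {α : K} (hα : α ^ 2 = d) :
    ∃ (δ : 𝓞 K) (c : ℚ), δ ^ 2 = quadDiscr d ∧ 2 ∣ δ + quadDiscr d ∧ c * (δ : K) = α := by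
  obtain ⟨a, ha, rfl⟩ := exists_ringOfIntegers_sq_eq hα
  by_cases hd : d % 4 = 1
  · refine ⟨a, 1, ?_, ?_, by rw [Rat.cast_one, one_mul]⟩ <;> rw [quadDiscr, if_pos hd]
    · exact ha
    · obtain ⟨k, rfl⟩ : ∃ k, d = 1 + 2 * k := ⟨d / 2, by omega⟩
      have := (two_dvd_add_one_of_sq_eq hd ha).add (dvd_mul_right 2 (k : 𝓞 K))
      push_cast
      rwa [← add_assoc]
  · refine ⟨2 * a, 1 / 2, ?_, ?_, ?_⟩
    · rw [quadDiscr, if_neg hd, mul_pow, ha]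
      push_cast
      norm_num
    · exact (dvd_mul_right 2 a).add ⟨2 * d, by rw [quadDiscr, if_neg hd]; push_cast; ring⟩
    · rw [RingOfIntegers.coe_eq_algebraMap, map_mul, map_ofNat]
      push_cast
      ring

lemma apply_eq_self_of_mem_inertia {p d : ℤ} (hp : Prime p) (hpd : ¬ p ∣ quadDiscr d)
    {P : Ideal (𝓞 K)} [hP : P.IsPrime] (hpP : (p : 𝓞 K) ∈ P) {σ : Gal(K/ℚ)}
    (hσ : σ ∈ P.inertia Gal(K/ℚ)) {α : K} (hα : α ^ 2 = d) : σ α = α := by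
  obtain ⟨δ, c, hδ, ⟨ω, hω⟩, rfl⟩ := exists_sq_eq_quadDiscr hα
  have hδP : δ ∉ P := by
    intro h
    have : P.LiesOver (Ideal.span {p}) := (Ideal.liesOver_span_iff hP.ne_top hp).2 hpP
    have hmem : (quadDiscr d : 𝓞 K) ∈ P := hδ ▸ P.pow_mem_of_mem h 2 two_pos
    exact hpd (Ideal.mem_span_singleton.1 ((Ideal.mem_of_liesOver P (Ideal.span {p}) _).2 hmem))
  have hδK : (δ : K) ^ 2 = quadDiscr d := by
    simpa using congr_arg (algebraMap (𝓞 K) K) hδ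
  have hωK : (δ : K) + quadDiscr d = 2 * ω := by
    simpa [map_ofNat] using congr_arg (algebraMap (𝓞 K) K) hω
  have hσω : σ δ + quadDiscr d = 2 * σ ω := by
    rw [← map_intCast σ, ← map_add, hωK, map_mul, map_ofNat]
  -- If `σ δ = -δ`, then inertia acting on `ω = (δ + quadDiscr d) / 2` gives `-δ = σ ω - ω ∈ P`.
  have hfix : σ δ = δ := by
    refine (sq_eq_sq_iff_eq_or_eq_neg.1 ?_).resolve_right fun hneg ↦ hδP ?_
    · rw [← map_pow, hδK, map_intCast]
    · have hsub : σ • ω - ω = -δ := by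
        refine RingOfIntegers.coe_injective ?_
        rw [map_sub, map_neg, algebraMap.smul']
        change σ ω - ω = _
        linear_combination (hωK - hσω + hneg) / 2
      exact neg_mem_iff.1 (hsub ▸ AddSubgroup.mem_inertia.1 hσ ω)
  rw [map_mul, map_ratCast, hfix]

lemma not_dvd_discr_of_inertia_eq_bot {K : Type*} [Field K] [NumberField K]
    [IsGalois ℚ K] {p : ℤ} (hp : Prime p)
    (h : ∀ P : Ideal (𝓞 K), P.IsPrime → (p : 𝓞 K) ∈ P → P.inertia Gal(K/ℚ) = ⊥) :
    ¬ p ∣ discr K := by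
  rw [not_dvd_discr_iff_forall_mem K (𝓞 K) hp]
  intro P hP hpP
  have := IsGaloisGroup.of_isFractionRing Gal(K/ℚ) ℤ (𝓞 K) ℚ K
  have : P.LiesOver (Ideal.span {p}) := (Ideal.liesOver_span_iff hP.ne_top hp).2 hpP
  have : (Ideal.span {p}).IsMaximal :=
    PrincipalIdealRing.isMaximal_of_irreducible hp.irreducible
  rw [← Ideal.ramificationIdx_eq_one_iff,
    ← Ideal.ramificationIdxIn_eq_ramificationIdx (Ideal.span {p}) P Gal(K/ℚ),
    ← Ideal.card_inertia_eq_ramificationIdxIn (G := Gal(K/ℚ)) (Ideal.span {p}) P, h P hP hpP,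
    Subgroup.card_bot]

theorem not_dvd_discr_multiquadratic {T : Set ℤ} [NumberField (multiquadratic T)] {p : ℤ}
    (hp : Prime p) (hT : ∀ d ∈ T, ¬ p ∣ quadDiscr d) : ¬ p ∣ discr (multiquadratic T) := by
  refine not_dvd_discr_of_inertia_eq_bot hp fun P hP hpP ↦
    (Subgroup.eq_bot_iff_forall _).2 fun σ hσ ↦ ?_
  refine AlgEquiv.coe_toAlgHom_injective (algHom_ext_of_eq_adjoin _ rfl ?_)
  rintro x ⟨d, hd, hx⟩
  exact apply_eq_self_of_mem_inertia hp (hT d hd) hpP hσ (Subtype.ext hx)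

end Unramified

section Degree

variable {T : Set ℤ} {p d : ℤ}

lemma mem_of_sq_eq_sq {k L : Type*} [Field k] [Field L] [Algebra k L]
    {F : IntermediateField k L} {x y : L} (h : x ^ 2 = y ^ 2) (hy : y ∈ F) : x ∈ F := by
  obtain rfl | rfl := sq_eq_sq_iff_eq_or_eq_neg.1 h
  exacts [hy, F.neg_mem hy]

lemma multiquadratic_insert {a : ℂ} (ha : a ^ 2 = d) :
    multiquadratic (insert d T) = ((multiquadratic T)⟮a⟯).restrictScalars ℚ := by
  refine le_antisymm (multiquadratic_le_iff.2 ?_) ?_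
  · rintro e (rfl | he) x hx
    · exact mem_of_sq_eq_sq (hx.trans ha.symm) (mem_adjoin_simple_self (multiquadratic T) a)
    · exact algebraMap_mem _ (⟨x, mem_multiquadratic he hx⟩ : multiquadratic T)
  · refine (adjoin_adjoin_left ℚ _ {a}).trans_le (adjoin_le_iff.2 ?_)
    rintro x (⟨e, he, hx⟩ | rfl)
    exacts [mem_multiquadratic (.inr he) hx, mem_multiquadratic (.inl rfl) ha]

theorem dvd_discr_multiquadratic_iff [NumberField (multiquadratic T)] (hp : Prime p)
    (hT : ∀ d ∈ T, Squarefree d) :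
    p ∣ discr (multiquadratic T) ↔ ∃ d ∈ T, p ∣ quadDiscr d := by
  refine ⟨fun h ↦ ?_, ?_⟩
  · by_contra! hndvd
    exact not_dvd_discr_multiquadratic hp hndvd h
  · rintro ⟨d, hd, hpd⟩
    obtain ⟨x, hx⟩ : ∃ x : ℂ, x ^ 2 = d := IsAlgClosed.exists_pow_nat_eq _ two_pos
    exact dvd_discr_of_dvd_quadDiscr hp (hT d hd) hpd
      (α := ⟨x, mem_multiquadratic hd hx⟩) (Subtype.ext hx)

lemma finrank_adjoin_simple_of_sq_mem {F L : Type*} [Field F] [Field L] [Algebra F L]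
    {a : L} {c : F} (ha : a ^ 2 = algebraMap F L c) (haF : a ∉ (algebraMap F L).range) :
    Module.finrank F F⟮a⟯ = 2 := by
  have hirr : Irreducible (X ^ 2 - C c) := by
    refine (X_pow_sub_C_irreducible_iff_of_prime Nat.prime_two).2 fun b hb ↦ haF ?_
    rw [← hb, map_pow] at ha
    obtain rfl | rfl := sq_eq_sq_iff_eq_or_eq_neg.1 ha
    exacts [⟨b, rfl⟩, ⟨-b, map_neg _ b⟩]
  have hmonic : (X ^ 2 - C c).Monic := monic_X_pow_sub_C c two_ne_zero
  have hroot : Polynomial.aeval a (X ^ 2 - C c) = 0 := by simp [ha]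
  rw [adjoin.finrank ⟨_, hmonic, hroot⟩, ← minpoly.eq_of_irreducible_of_monic hirr hroot hmonic,
    Polynomial.natDegree_X_pow_sub_C]

theorem finrank_multiquadratic_insert [NumberField (multiquadratic T)] (hp : Prime p)
    (hd : Squarefree d) (hpd : p ∣ quadDiscr d) (hT : ∀ e ∈ T, ¬ p ∣ quadDiscr e) :
    Module.finrank ℚ (multiquadratic (insert d T)) = 2 * Module.finrank ℚ (multiquadratic T) := by
  obtain ⟨a, ha⟩ : ∃ a : ℂ, a ^ 2 = d := IsAlgClosed.exists_pow_nat_eq _ two_pos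
  have haF : a ∉ multiquadratic T := fun h ↦
    not_dvd_discr_multiquadratic hp hT
      (dvd_discr_of_dvd_quadDiscr (K := multiquadratic T) hp hd hpd
        (α := ⟨a, h⟩) (Subtype.ext ha))
  have hquad : Module.finrank (multiquadratic T) (multiquadratic T)⟮a⟯ = 2 :=
    finrank_adjoin_simple_of_sq_mem (c := (d : multiquadratic T)) (by simpa using ha)
      (by rintro ⟨b, rfl⟩; exact haF b.2)
  rw [multiquadratic_insert ha, mul_comm, ← hquad]
  exact (Module.finrank_mul_finrank ℚ (multiquadratic T) (multiquadratic T)⟮a⟯).symm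

end Degree

section SignedPrime

/-- The integer `p* = (-1) ^ ((p - 1) / 2) * p` attached to an odd prime `p`. At `p = 2` the value
is `-1`, so that `quadDiscr (signedPrime p)` is always a prime discriminant, namely `-4` at `2`. -/
def signedPrime (p : ℕ) : ℤ := if p = 2 then -1 else (-1) ^ ((p - 1) / 2) * p

variable {p q : ℕ} {d : ℤ}

lemma signedPrime_two : signedPrime 2 = -1 := rfl

lemma signedPrime_of_ne_two (hp : p ≠ 2) : signedPrime p = (-1) ^ ((p - 1) / 2) * p := if_neg hp

lemma natAbs_signedPrime (hp : p ≠ 2) : (signedPrime p).natAbs = p := by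
  rw [signedPrime_of_ne_two hp, Int.natAbs_mul, Int.natAbs_pow, Int.natAbs_neg, Int.natAbs_one,
    one_pow, one_mul, Int.natAbs_natCast]

lemma signedPrime_modEq_one (hp : Odd p) : signedPrime p ≡ 1 [ZMOD 4] := by
  obtain ⟨k, rfl⟩ := hp
  rw [signedPrime_of_ne_two (by omega), show (2 * k + 1 - 1) / 2 = k by omega]
  obtain ⟨m, rfl | rfl⟩ := Nat.even_or_odd' k
  · rw [pow_mul, neg_one_sq, one_pow, Int.ModEq]
    omega
  · rw [pow_succ, pow_mul, neg_one_sq, one_pow, Int.ModEq]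
    omega

lemma squarefree_signedPrime (hp : p.Prime) : Squarefree (signedPrime p) := by
  obtain rfl | hp2 := eq_or_ne p 2
  · exact (isUnit_one.neg).squarefree
  · rw [← Int.squarefree_natAbs, natAbs_signedPrime hp2]
    exact hp.prime.squarefree

lemma natCast_dvd_quadDiscr_iff (hp : p.Prime) :
    (p : ℤ) ∣ quadDiscr d ↔ (p : ℤ) ∣ d ∨ p = 2 ∧ d % 4 ≠ 1 := by
  rw [quadDiscr]
  split_ifs with hd
  · simp [hd]
  · have h4 : (p : ℤ) ∣ 4 ↔ p = 2 := by
      rw [← Nat.prime_dvd_prime_iff_eq hp Nat.prime_two, ← hp.prime.dvd_pow_iff_dvd two_ne_zero]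
      exact Int.natCast_dvd
    rw [(Nat.prime_iff_prime_int.1 hp).dvd_mul, h4]
    tauto

lemma natCast_dvd_quadDiscr_signedPrime_iff (hp : p.Prime) (hq : q.Prime) :
    (p : ℤ) ∣ quadDiscr (signedPrime q) ↔ p = q := by
  rw [natCast_dvd_quadDiscr_iff hp]
  obtain rfl | hq2 := eq_or_ne q 2
  · rw [signedPrime_two, Int.dvd_neg, Int.natCast_dvd]
    simp [hp.one_lt.ne']
  · have hmod : signedPrime q % 4 = 1 := signedPrime_modEq_one (hq.odd_of_ne_two hq2)
    rw [Int.natCast_dvd, natAbs_signedPrime hq2, Nat.prime_dvd_prime_iff_eq hp hq]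
    simp [hmod]

lemma prod_signedPrime_modEq_one {s : Finset ℕ} (hs : ∀ p ∈ s, Odd p) :
    ∏ p ∈ s, signedPrime p ≡ 1 [ZMOD 4] :=
  Finset.prod_induction signedPrime (· ≡ 1 [ZMOD 4]) (fun _ _ ↦ Int.ModEq.mul) rfl
    fun p hp ↦ signedPrime_modEq_one (hs p hp)

theorem prod_signedPrime_primeFactors (hd : Squarefree d) (hodd : Odd d) :
    ∏ p ∈ (quadDiscr d).natAbs.primeFactors, signedPrime p = d := by
  have hpodd : ∀ p ∈ d.natAbs.primeFactors, Odd p := fun p hp ↦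
    hodd.natAbs.of_dvd_nat (Nat.dvd_of_mem_primeFactors hp)
  have habs : (∏ p ∈ d.natAbs.primeFactors, signedPrime p).natAbs = d.natAbs := by
    calc (∏ p ∈ d.natAbs.primeFactors, signedPrime p).natAbs
        = ∏ p ∈ d.natAbs.primeFactors, (signedPrime p).natAbs := map_prod Int.natAbsHom _ _
      _ = ∏ p ∈ d.natAbs.primeFactors, p := Finset.prod_congr rfl fun p hp ↦
        natAbs_signedPrime (by rintro rfl; exact absurd (hpodd 2 hp) (by decide))
      _ = d.natAbs := Nat.prod_primeFactors_of_squarefree (Int.squarefree_natAbs.2 hd)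
  have hmod := prod_signedPrime_modEq_one hpodd
  have hd2 := Int.odd_iff.1 hodd
  rw [quadDiscr]
  rw [Int.ModEq] at hmod
  split_ifs with hd4
  · omega
  · rw [Int.natAbs_mul, Nat.primeFactors_mul (by decide) (by omega)]
    have : (Int.natAbs 4).primeFactors = {2} := Nat.primeFactors_prime_pow two_ne_zero Nat.prime_two
    rw [this, ← Finset.insert_eq, Finset.prod_insert fun h ↦ absurd (hpodd 2 h) (by decide),
      signedPrime_two]
    omega

theorem finrank_multiquadratic_signedPrime {s : Finset ℕ} (hs : ∀ p ∈ s, p.Prime) :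
    Module.finrank ℚ (multiquadratic (signedPrime '' s)) = 2 ^ s.card := by
  induction s using Finset.induction_on with
  | empty =>
    have hbot : multiquadratic (signedPrime '' (∅ : Finset ℕ)) = ⊥ := by simp [multiquadratic]
    rw [hbot, Finset.card_empty, pow_zero]
    exact IntermediateField.finrank_bot
  | insert p s hps ih =>
    obtain ⟨hp, hs⟩ := (Finset.forall_mem_insert ..).1 hs
    specialize ih hs
    have : FiniteDimensional ℚ (multiquadratic (signedPrime '' s)) :=
      .of_finrank_pos (ih ▸ pow_pos two_pos _)
    have : NumberField (multiquadratic (signedPrime '' s)) := {}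
    have hndvd : ∀ e ∈ signedPrime '' s, ¬ (p : ℤ) ∣ quadDiscr e := by
      rintro _ ⟨q, hq, rfl⟩ hdvd
      obtain rfl := (natCast_dvd_quadDiscr_signedPrime_iff hp (hs q hq)).1 hdvd
      exact hps hq
    rw [Finset.coe_insert, Set.image_insert_eq, finrank_multiquadratic_insert
      (Nat.prime_iff_prime_int.1 hp) (squarefree_signedPrime hp)
      ((natCast_dvd_quadDiscr_signedPrime_iff hp hp).2 rfl) hndvd, ih,
      Finset.card_insert_of_notMem hps, pow_succ']

lemma mem_of_sq_eq_prod {k L : Type*} [Field k] [Field L] [Algebra k L] [IsAlgClosed L]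
    {F : IntermediateField k L} {ι : Type*} {s : Finset ι} {f : ι → L}
    (hF : ∀ i ∈ s, ∀ y, y ^ 2 = f i → y ∈ F) {x : L} (hx : x ^ 2 = ∏ i ∈ s, f i) : x ∈ F := by
  choose r hr using fun i ↦ IsAlgClosed.exists_pow_nat_eq (f i) two_pos
  have hsq : x ^ 2 = (∏ i ∈ s, r i) ^ 2 := by simp only [hx, ← Finset.prod_pow, hr]
  exact mem_of_sq_eq_sq hsq (prod_mem fun i hi ↦ hF i hi _ (hr i))

theorem multiquadratic_le_multiquadratic_signedPrime {T : Set ℤ} {S : Set ℕ}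
    (hsf : ∀ d ∈ T, Squarefree d) (hodd : ∀ d ∈ T, Odd d)
    (hS : ∀ d ∈ T, ∀ p : ℕ, p.Prime → (p : ℤ) ∣ quadDiscr d → p ∈ S) :
    multiquadratic T ≤ multiquadratic (signedPrime '' S) := by
  refine multiquadratic_le_iff.2 fun d hd x hx ↦ mem_of_sq_eq_prod
    (s := (quadDiscr d).natAbs.primeFactors) (f := fun p ↦ (signedPrime p : ℂ)) ?_ ?_
  · intro p hp y hy
    exact mem_multiquadratic ⟨p, hS d hd p (Nat.prime_of_mem_primeFactors hp)
      (Int.natCast_dvd.2 (Nat.dvd_of_mem_primeFactors hp)), rfl⟩ hy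
  · rw [hx, ← Int.cast_prod, prod_signedPrime_primeFactors (hsf d hd) (hodd d hd)]

end SignedPrime


section GenusField

variable {d₁ d₂ : ℤ}

lemma biquad_eq_multiquadratic : biquad d₁ d₂ = multiquadratic {d₁, d₂} := by
  simp only [biquad, multiquadratic, Set.mem_insert_iff, Set.mem_singleton_iff,
    exists_eq_or_imp, exists_eq_left]

lemma exists_natCast_dvd_quadDiscr_iff {p : ℕ} (hp : p.Prime) :
    (∃ d ∈ ({d₁, d₂} : Set ℤ), (p : ℤ) ∣ quadDiscr d) ↔
      (p : ℤ) ∣ d₁ * d₂ ∨ p = 2 ∧ ¬ (d₁ % 4 = 1 ∧ d₂ % 4 = 1) := by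
  simp only [Set.mem_insert_iff, Set.mem_singleton_iff, exists_eq_or_imp, exists_eq_left,
    natCast_dvd_quadDiscr_iff hp, (Nat.prime_iff_prime_int.1 hp).dvd_mul]
  tauto

lemma mem_genusGens_iff (hodd : Odd (d₁ * d₂)) {x : ℂ} :
    x ∈ genusGens d₁ d₂ ↔
      ∃ p : ℕ, p.Prime ∧ (p : ℤ) ∣ d₁ * d₂ ∧ x ^ 2 = (signedPrime p : ℂ) := by
  refine exists_congr fun p ↦ and_congr_right fun _ ↦ and_congr_right fun hpd ↦ ?_
  have hp2 : p ≠ 2 := by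
    rintro rfl
    exact Int.not_even_iff_odd.2 hodd (even_iff_two_dvd.2 hpd)
  rw [signedPrime_of_ne_two hp2]
  push_cast
  rfl

theorem genusField_eq_multiquadratic (hodd : Odd (d₁ * d₂)) :
    genusField d₁ d₂ = multiquadratic (signedPrime ''
      {p : ℕ | p.Prime ∧ ∃ d ∈ ({d₁, d₂} : Set ℤ), (p : ℤ) ∣ quadDiscr d}) := by
  rw [genusField, multiquadratic]
  split_ifs with hd <;> congr 1 <;> ext x <;>
    simp only [Set.mem_union, mem_genusGens_iff hodd, Set.mem_ofPred_eq, Set.exists_mem_image]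
  · refine exists_congr fun p ↦ ?_
    rw [and_assoc]
    refine and_congr_right fun hp ↦ ?_
    rw [exists_natCast_dvd_quadDiscr_iff hp, or_iff_left fun h ↦ h.2 hd]
  · constructor
    · rintro (⟨p, hp, hpd, hx⟩ | hx)
      · exact ⟨p, ⟨hp, (exists_natCast_dvd_quadDiscr_iff hp).2 (.inl hpd)⟩, hx⟩
      · have hdvd := (exists_natCast_dvd_quadDiscr_iff Nat.prime_two).2 (.inr ⟨rfl, hd⟩)
        exact ⟨2, ⟨Nat.prime_two, hdvd⟩, by simp [signedPrime_two, hx]⟩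
    · rintro ⟨p, ⟨hp, hpd⟩, hx⟩
      obtain hpd | ⟨rfl, -⟩ := (exists_natCast_dvd_quadDiscr_iff hp).1 hpd
      · exact .inl ⟨p, hp, hpd, hx⟩
      · exact .inr (by simpa [signedPrime_two] using hx)

lemma coe_primeFactors_discr {T : Set ℤ} {K : IntermediateField ℚ ℂ} [NumberField K]
    (hK : K = multiquadratic T) (hT : ∀ d ∈ T, Squarefree d) :
    ((discr K).natAbs.primeFactors : Set ℕ) =
      {p : ℕ | p.Prime ∧ ∃ d ∈ T, (p : ℤ) ∣ quadDiscr d} := by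
  subst hK
  ext p
  rw [Finset.mem_coe, Nat.mem_primeFactors_of_ne_zero (Int.natAbs_ne_zero.2 (discr_ne_zero _)),
    ← Int.natCast_dvd]
  exact and_congr_right fun hp ↦ dvd_discr_multiquadratic_iff (Nat.prime_iff_prime_int.1 hp) hT

end GenusField

theorem stmt2 (d₁ d₂ : ℤ) (hsf₁ : Squarefree d₁) (hsf₂ : Squarefree d₂)
    (hodd₁ : Odd d₁) (hodd₂ : Odd d₂) (hne : d₁ ≠ d₂) (h1 : d₁ ≠ 1) (h2 : d₂ ≠ 1)
    (hnsq : ¬ IsSquare (d₁ * d₂))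
    [NumberField (biquad d₁ d₂)]
    (hdeg : Module.finrank ℚ (biquad d₁ d₂) = 4) :
    ∃ h : biquad d₁ d₂ ≤ genusField d₁ d₂,
      Module.finrank (biquad d₁ d₂) (IntermediateField.extendScalars h) =
        2 ^ ((NumberField.discr (biquad d₁ d₂)).natAbs.primeFactors.card - 2) := by
  have hsf : ∀ d ∈ ({d₁, d₂} : Set ℤ), Squarefree d := by simp [hsf₁, hsf₂]
  have hodd : ∀ d ∈ ({d₁, d₂} : Set ℤ), Odd d := by simp [hodd₁, hodd₂]
  have hprimes := coe_primeFactors_discr (biquad_eq_multiquadratic (d₁ := d₁) (d₂ := d₂)) hsf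
  set s := (discr (biquad d₁ d₂)).natAbs.primeFactors
  have hG : genusField d₁ d₂ = multiquadratic (signedPrime '' s) := by
    rw [hprimes, genusField_eq_multiquadratic (hodd₁.mul hodd₂)]
  have hle : biquad d₁ d₂ ≤ genusField d₁ d₂ := by
    rw [biquad_eq_multiquadratic, hG, hprimes]
    exact multiquadratic_le_multiquadratic_signedPrime hsf hodd fun d hd p hp hpd ↦ ⟨hp, d, hd, hpd⟩
  have hrank : Module.finrank ℚ (genusField d₁ d₂) = 2 ^ s.card := by
    rw [hG, finrank_multiquadratic_signedPrime fun p hp ↦ Nat.prime_of_mem_primeFactors hp]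
  have htower : Module.finrank ℚ (biquad d₁ d₂) *
      Module.finrank (biquad d₁ d₂) (extendScalars hle) = Module.finrank ℚ (genusField d₁ d₂) :=
    Module.finrank_mul_finrank ℚ (biquad d₁ d₂) (extendScalars hle)
  rw [hdeg, hrank, show 4 = 2 ^ 2 from rfl] at htower
  have hcard : 2 ≤ s.card := (Nat.pow_dvd_pow_iff_le_right Nat.one_lt_two).1 ⟨_, htower.symm⟩
  exact ⟨hle, by rw [← Nat.pow_div hcard two_pos, ← htower, Nat.mul_div_cancel_left _ (by decide)]⟩
end
end

section
/- Let K = ℚ(√d₁, √d₂) be a biquadratic field with d₁, d₂ positive odd squarefree integers, and suppose ω(|Δ_K|) ≥ 3, where Δ_K is the discriminant of K. Then there is an injective group homomorphism from (ℤ/2ℤ)^{ω(|Δ_K|) − 3} into the ideal class group Cl_K of K. -/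
open IntermediateField NumberField
noncomputable section
/-!
The argument is genus theory for a field generated by square roots `√dᵢ`, `i ∈ ι`; here `|ι| = 2`.
Let `P` be the set of primes that ramify in some `ℚ(√dᵢ)`. By quadratic reciprocity, `(dᵢ / l)` is
the product of the genus characters of `l` at the primes ramified in `ℚ(√dᵢ)`. So among the
`2 ^ |P|` vectors of signs indexed by `P`, at least a fraction `2 ^ (-|ι|)` are compatible with all
`(dᵢ / l) = 1`; by Dirichlet's theorem each of these is the vector of genus characters of a prime
`l` that splits completely, hence of the norm of a prime ideal `L`.

If two such ideals `L`, `L'` have the same class modulo squares, then `L L' J²` is principal for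
some `J`, so up to a sign `N L · N L'` is a norm from `ℚ(√dᵢ)` for every `i`, and its genus
characters are trivial. Hence the sign vectors of `L` and `L'` agree up to that of `-1`, and there
are at least `2 ^ (|P| - |ι| - 1)` classes modulo squares. Finally, `P` contains all primes
dividing the discriminant.
-/

open scoped NumberTheorySymbols nonZeroDivisors

theorem exists_injective_linearMap_of_pow_le_card {A : Type*} [AddCommGroup A] [Finite A] {p : ℕ}
    [Fact p.Prime] [Module (ZMod p) A] {r : ℕ} (h : p ^ r ≤ Nat.card A) :
    ∃ f : (Fin r → ZMod p) →ₗ[ZMod p] A, Function.Injective f := by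
  rw [← finrank_le_iff_exists_linearMap, Module.finrank_fin_fun,
    ← Nat.pow_le_pow_iff_right (Fact.out : p.Prime).one_lt]
  rwa [Module.natCard_eq_pow_finrank (K := ZMod p), Nat.card_zmod] at h

theorem exists_injective_hom_of_pow_le_index_range_powMonoidHom {C : Type*} [CommGroup C] [Finite C]
    {p : ℕ} [Fact p.Prime] {r : ℕ} (h : p ^ r ≤ (powMonoidHom p : C →* C).range.index) :
    ∃ f : Multiplicative (Fin r → ZMod p) →* C, Function.Injective f := by
  let _ : Module (ZMod p) (Additive (powMonoidHom p : C →* C).ker) :=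
    AddCommGroup.zmodModule fun x ↦ Additive.toMul.injective (Subtype.ext x.toMul.2)
  -- `C[p]` and `C / Cᵖ` have the same order.
  rw [Subgroup.index_range] at h
  obtain ⟨g, hg⟩ := exists_injective_linearMap_of_pow_le_card
    (A := Additive (powMonoidHom p : C →* C).ker) h
  exact ⟨(powMonoidHom p : C →* C).ker.subtype.comp
    (AddMonoidHom.toMultiplicativeLeft g.toAddMonoidHom), Subtype.val_injective.comp hg⟩

theorem card_le_card_ker_mul_card {G H : Type*} [Group G] [Group H] [Finite H] (f : G →* H) :
    Nat.card G ≤ Nat.card f.ker * Nat.card H := by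
  rw [← Subgroup.card_mul_index f.ker, Subgroup.index_ker]
  exact Nat.mul_le_mul_left _ (Subgroup.card_le_card_group _)

theorem card_le_card_mul_card_of_inv_mul_mem {α β G : Type*} [Group G] {g : α → G} {f : α → β}
    {E : Subgroup G} [Finite β] [Finite E] (hg : Function.Injective g)
    (h : ∀ a b, f a = f b → (g a)⁻¹ * g b ∈ E) : Nat.card α ≤ Nat.card β * Nat.card E := by
  let rep (a : α) : α := Set.rangeSplitting f (Set.rangeFactorization f a)
  have hrep (a : α) : f (rep a) = f a := Set.apply_rangeSplitting f _
  have hrep_congr {a b : α} (hab : f a = f b) : rep a = rep b :=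
    congrArg (Set.rangeSplitting f) (Subtype.ext hab)
  rw [← Nat.card_prod]
  refine Nat.card_le_card_of_injective
    (fun a ↦ (f a, (⟨(g (rep a))⁻¹ * g a, h _ _ (hrep a)⟩ : E))) fun a b hab ↦ hg ?_
  obtain ⟨hf, hE⟩ := Prod.ext_iff.mp hab
  have hE' := congrArg Subtype.val hE
  simp only [hrep_congr hf] at hE'
  exact mul_left_cancel hE'

/-! ### Genus characters -/

/-- The quadratic character that genus theory attaches to a prime `p`: the Legendre symbol `(· / p)`
for odd `p`, and `χ₄` for `p = 2`. -/
def genusChar (p : ℕ) : ℤ →* ℤ :=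
  if p = 2 then ZMod.χ₄.toMonoidHom.comp (Int.castRingHom (ZMod 4)) else
    { toFun := fun a ↦ J(a | p)
      map_one' := jacobiSym.one_left p
      map_mul' := fun a b ↦ jacobiSym.mul_left a b p }

/-- The conductor of `genusChar p` for a prime `p`. -/
def genusModulus (p : ℕ) : ℕ := if p = 2 then 4 else p

theorem genusChar_two_apply (a : ℤ) : genusChar 2 a = ZMod.χ₄ a := rfl

theorem genusChar_apply_of_ne_two {p : ℕ} (hp : p ≠ 2) (a : ℤ) : genusChar p a = J(a | p) := by
  rw [genusChar, if_neg hp]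
  rfl

theorem genusChar_congr {p a b : ℕ} (h : a ≡ b [MOD genusModulus p]) :
    genusChar p a = genusChar p b := by
  obtain rfl | hp := eq_or_ne p 2
  · rw [genusChar_two_apply, genusChar_two_apply, Int.cast_natCast, Int.cast_natCast,
      (ZMod.natCast_eq_natCast_iff a b 4).mpr h]
  · rw [genusModulus, if_neg hp] at h
    rw [genusChar_apply_of_ne_two hp, genusChar_apply_of_ne_two hp]
    exact jacobiSym.mod_left' (Int.natCast_modEq_iff.mpr h)

theorem isUnit_genusChar_iff {p : ℕ} (hp : p.Prime) {a : ℤ} :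
    IsUnit (genusChar p a) ↔ ¬ (p : ℤ) ∣ a := by
  obtain rfl | hp2 := eq_or_ne p 2
  · rw [genusChar_two_apply, ZMod.χ₄_int_eq_if_mod_four, Nat.cast_ofNat, Int.dvd_iff_emod_eq_zero]
    split_ifs <;> simp_all
  · have hcop : ¬ (p : ℤ) ∣ a ↔ a.gcd p = 1 := by
      rw [← (Nat.prime_iff_prime_int.mp hp).coprime_iff_not_dvd, isCoprime_comm,
        Int.isCoprime_iff_gcd_eq_one]
    rw [genusChar_apply_of_ne_two hp2, hcop]
    refine ⟨fun h ↦ ?_, fun h ↦ Int.isUnit_iff.mpr (jacobiSym.eq_one_or_neg_one h)⟩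
    by_contra hgcd
    exact h.ne_zero (jacobiSym.eq_zero_iff.mpr ⟨hp.ne_zero, hgcd⟩)

theorem exists_genusChar_eq_neg_one {p : ℕ} (hp : p.Prime) :
    ∃ a : ℕ, a.Coprime (genusModulus p) ∧ genusChar p a = -1 := by
  obtain rfl | hp2 := eq_or_ne p 2
  · exact ⟨3, by decide, by rw [genusChar_two_apply]; decide⟩
  have := Fact.mk hp
  obtain ⟨x, hx⟩ := FiniteField.exists_nonsquare (F := ZMod p) (by rwa [ZMod.ringChar_zmod_n])
  refine ⟨x.val, ?_, ?_⟩
  · rw [genusModulus, if_neg hp2, Nat.coprime_comm, hp.coprime_iff_not_dvd,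
      ← ZMod.natCast_eq_zero_iff, ZMod.natCast_zmod_val]
    rintro rfl
    exact hx IsSquare.zero
  · rw [genusChar_apply_of_ne_two hp2, ← jacobiSym.legendreSym.to_jacobiSym,
      legendreSym.eq_neg_one_iff, Int.cast_natCast, ZMod.natCast_zmod_val]
    exact hx

theorem exists_genusChar_eq {p : ℕ} (hp : p.Prime) (u : ℤˣ) :
    ∃ a : ℕ, a.Coprime (genusModulus p) ∧ genusChar p a = u := by
  obtain rfl | rfl := Int.units_eq_one_or u
  · exact ⟨1, Nat.coprime_one_left _, map_one _⟩
  · exact exists_genusChar_eq_neg_one hp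

theorem genusModulus_ne_zero {p : ℕ} (hp : p ≠ 0) : genusModulus p ≠ 0 := by
  unfold genusModulus
  split_ifs <;> lia

theorem coprime_genusModulus {p q : ℕ} (h : p.Coprime q) :
    (genusModulus p).Coprime (genusModulus q) := by
  unfold genusModulus
  split_ifs with hp hq hq
  · simp_all
  · exact (hp ▸ h).pow_left 2
  · exact (hq ▸ h).pow_right 2
  · exact h

theorem exists_prime_gt_forall_genusChar_eq {ι : Type*} [Finite ι] {p : ι → ℕ}
    (hp : ∀ i, (p i).Prime) (hinj : Function.Injective p) (v : ι → ℤˣ) (N : ℕ) :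
    ∃ l > N, l.Prime ∧ ∀ i, genusChar (p i) l = v i := by
  have := Fintype.ofFinite ι
  choose a ha hav using fun i ↦ exists_genusChar_eq (hp i) (v i)
  have hne (i) : genusModulus (p i) ≠ 0 := genusModulus_ne_zero (hp i).ne_zero
  have hcop : ((Finset.univ : Finset ι) : Set ι).Pairwise
      (Function.onFun Nat.Coprime fun i ↦ genusModulus (p i)) := fun i _ j _ hij ↦
    coprime_genusModulus ((Nat.coprime_primes (hp i) (hp j)).mpr (hinj.ne hij))
  obtain ⟨k, hk⟩ := Nat.chineseRemainderOfFinset a _ Finset.univ (fun i _ ↦ hne i) hcop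
  have hk_coprime : k.Coprime (∏ i, genusModulus (p i)) :=
    Nat.Coprime.prod_right fun i hi ↦ (hk i hi).gcd_eq.trans (ha i)
  obtain ⟨l, hlN, hl, hlk⟩ := Nat.forall_exists_prime_gt_and_modEq N
    (Finset.prod_ne_zero_iff.mpr fun i _ ↦ hne i) hk_coprime
  refine ⟨l, hlN, hl, fun i ↦ ?_⟩
  rw [← hav i]
  exact genusChar_congr
    ((hlk.of_dvd (Finset.dvd_prod_of_mem _ (Finset.mem_univ i))).trans (hk i (Finset.mem_univ i)))

/-- The primes that ramify in `ℚ(√d)`, for `d` an odd squarefree integer: the prime divisors of `d`,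
together with `2` when `d ≡ 3 mod 4`. -/
def ramifiedPrimes (d : ℤ) : Finset ℕ :=
  d.natAbs.primeFactors ∪ if d % 4 = 3 then {2} else ∅

theorem mem_ramifiedPrimes {d : ℤ} (hd : d ≠ 0) {p : ℕ} :
    p ∈ ramifiedPrimes d ↔ p.Prime ∧ (p : ℤ) ∣ d ∨ p = 2 ∧ d % 4 = 3 := by
  unfold ramifiedPrimes
  split_ifs with h <;> simp [h, hd, Int.natCast_dvd, or_comm]

theorem prime_of_mem_ramifiedPrimes {d : ℤ} {p : ℕ} (hp : p ∈ ramifiedPrimes d) : p.Prime := by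
  have hd : d ≠ 0 := by
    rintro rfl
    simp [ramifiedPrimes] at hp
  obtain ⟨hp, -⟩ | ⟨rfl, -⟩ := (mem_ramifiedPrimes hd).mp hp
  exacts [hp, Nat.prime_two]

theorem jacobiSym_eq_prod_primeFactors (a : ℤ) {n : ℕ} (hn : Squarefree n) :
    J(a | n) = ∏ p ∈ n.primeFactors, J(a | p) := by
  have hnodup : n.primeFactorsList.Nodup :=
    (Nat.squarefree_iff_nodup_primeFactorsList hn.ne_zero).mp hn
  rw [Nat.primeFactors, List.prod_toFinset _ hnodup, ← jacobiSym.list_prod_right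
    fun p hp ↦ (Nat.prime_of_mem_primeFactorsList hp).ne_zero,
    Nat.prod_primeFactorsList hn.ne_zero]

theorem jacobiSym_natCast_eq_ite_mul {n l : ℕ} (hn : Odd n) (hl : Odd l) :
    J(n | l) = (if n % 4 = 3 then ZMod.χ₄ l else 1) * J(l | n) := by
  obtain h1 | h3 := Nat.odd_mod_four_iff.mp (Nat.odd_iff.mp hn)
  · rw [if_neg (by lia), one_mul, jacobiSym.quadratic_reciprocity_one_mod_four h1 hl]
  rw [if_pos h3]
  obtain hl1 | hl3 := Nat.odd_mod_four_iff.mp (Nat.odd_iff.mp hl)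
  · rw [ZMod.χ₄_nat_one_mod_four hl1, one_mul,
      jacobiSym.quadratic_reciprocity_one_mod_four' hn hl1]
  · rw [ZMod.χ₄_nat_three_mod_four hl3, neg_one_mul,
      jacobiSym.quadratic_reciprocity_three_mod_four h3 hl3]

theorem χ₄_natCast_mul_self {l : ℕ} (hl : Odd l) : ZMod.χ₄ l * ZMod.χ₄ l = 1 := by
  obtain h | h := Nat.odd_mod_four_iff.mp (Nat.odd_iff.mp hl)
  · rw [ZMod.χ₄_nat_one_mod_four h, one_mul]
  · rw [ZMod.χ₄_nat_three_mod_four h]; rfl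

theorem jacobiSym_eq_ite_mul_jacobiSym_natAbs {d : ℤ} (hd : Odd d) {l : ℕ} (hl : Odd l) :
    J(d | l) = (if d % 4 = 3 then ZMod.χ₄ l else 1) * J(l | d.natAbs) := by
  have hn : Odd d.natAbs := Int.natAbs_odd.mpr hd
  have hn2 : d.natAbs % 2 = 1 := Nat.odd_iff.mp hn
  obtain hd | hd := d.natAbs_eq
  · have h4 : d % 4 = 3 ↔ d.natAbs % 4 = 3 := by lia
    simp only [h4, ← jacobiSym_natCast_eq_ite_mul hn hl, ← hd]
  · have h4 : d % 4 = 3 ↔ ¬ d.natAbs % 4 = 3 := by lia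
    conv_lhs => rw [hd, jacobiSym.neg _ hl, jacobiSym_natCast_eq_ite_mul hn hl]
    simp only [h4, ite_not]
    split_ifs
    · rw [← mul_assoc, χ₄_natCast_mul_self hl]
    · rw [one_mul]

theorem jacobiSym_eq_prod_genusChar {d : ℤ} (hd : Odd d) (hsf : Squarefree d) {l : ℕ} (hl : Odd l) :
    J(d | l) = ∏ q ∈ ramifiedPrimes d, genusChar q l := by
  have hne_two {q : ℕ} (hq : q ∈ d.natAbs.primeFactors) : q ≠ 2 := by
    rintro rfl
    exact (Int.natAbs_odd.mpr hd).not_two_dvd_nat (Nat.dvd_of_mem_primeFactors hq)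
  have hprod : J(l | d.natAbs) = ∏ q ∈ d.natAbs.primeFactors, genusChar q l := by
    rw [jacobiSym_eq_prod_primeFactors _ (Int.squarefree_natAbs.mpr hsf)]
    exact Finset.prod_congr rfl fun q hq ↦ (genusChar_apply_of_ne_two (hne_two hq) _).symm
  rw [jacobiSym_eq_ite_mul_jacobiSym_natAbs hd hl, hprod, ramifiedPrimes]
  split_ifs with h
  · rw [Finset.prod_union (Finset.disjoint_singleton_right.mpr fun h2 ↦ hne_two h2 rfl),
      Finset.prod_singleton, genusChar_two_apply, mul_comm, Int.cast_natCast]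
  · rw [Finset.union_empty, one_mul]

/-! ### Norms from quadratic fields -/

theorem exists_int_sq_mul_eq_of_rat {c d : ℤ} {A B : ℚ} (h : (c : ℚ) = A ^ 2 - d * B ^ 2) :
    ∃ m a b : ℤ, m ≠ 0 ∧ m ^ 2 * c = a ^ 2 - d * b ^ 2 := by
  refine ⟨A.den * B.den, A.num * B.den, B.num * A.den, by positivity, ?_⟩
  have hA : A * A.den = A.num := A.mul_den_eq_num
  have hB : B * B.den = B.num := B.mul_den_eq_num
  have key : ((A.den : ℚ) * B.den) ^ 2 * c = (A.num * B.den) ^ 2 - d * (B.num * A.den) ^ 2 := by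
    rw [← hA, ← hB]
    linear_combination (A.den * B.den : ℚ) ^ 2 * h
  exact_mod_cast key

theorem exists_not_dvd_sq_mul_eq {p c d : ℤ} (hp : Prime p)
    (hdvd : ∀ m a b : ℤ, p ∣ m → m ^ 2 * c = a ^ 2 - d * b ^ 2 → p ∣ a ∧ p ∣ b)
    {m a b : ℤ} (hm : m ≠ 0) (h : m ^ 2 * c = a ^ 2 - d * b ^ 2) :
    ∃ m a b : ℤ, ¬ p ∣ m ∧ m ^ 2 * c = a ^ 2 - d * b ^ 2 := by
  obtain ⟨k, m, hpm, rfl⟩ := WfDvdMonoid.max_power_factor hm hp.irreducible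
  clear hm
  induction k generalizing a b with
  | zero => exact ⟨m, a, b, hpm, by simpa using h⟩
  | succ k ih =>
    obtain ⟨⟨a, rfl⟩, b, rfl⟩ := hdvd _ a b (Dvd.intro_left (p ^ k * m) (by ring)) h
    refine ih (a := a) (b := b) (mul_left_cancel₀ (pow_ne_zero 2 hp.ne_zero) ?_)
    linear_combination h

theorem dvd_and_dvd_of_sq_mul_eq {p c d m a b : ℤ} (hp : Prime p) (hd : p ∣ d)
    (hd2 : ¬ p * p ∣ d) (hm : p ∣ m) (h : m ^ 2 * c = a ^ 2 - d * b ^ 2) : p ∣ a ∧ p ∣ b := by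
  obtain ⟨d, rfl⟩ := hd
  obtain ⟨m, rfl⟩ := hm
  obtain ⟨a, rfl⟩ : p ∣ a :=
    hp.dvd_of_dvd_pow (n := 2) ⟨p * m ^ 2 * c + d * b ^ 2, by linear_combination -h⟩
  have hdb : p ∣ d * b ^ 2 :=
    ⟨a ^ 2 - m ^ 2 * c, mul_left_cancel₀ hp.ne_zero (by linear_combination h)⟩
  have hpd : ¬ p ∣ d := fun hpd ↦ hd2 (mul_dvd_mul_left p hpd)
  exact ⟨dvd_mul_right p a, hp.dvd_of_dvd_pow ((hp.dvd_or_dvd hdb).resolve_left hpd)⟩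

theorem sq_mul_eq_sq_add_sq_zmod_four {c d m a b : ℤ} (hd : d % 4 = 3)
    (h : m ^ 2 * c = a ^ 2 - d * b ^ 2) : (m ^ 2 * c : ZMod 4) = a ^ 2 + b ^ 2 := by
  have hd' : (d : ZMod 4) = (-1 : ℤ) := (ZMod.intCast_eq_intCast_iff' d (-1) 4).mpr hd
  have hmod := congrArg (Int.cast : ℤ → ZMod 4) h
  push_cast at hmod hd'
  linear_combination hmod - b ^ 2 * hd'

theorem two_dvd_and_two_dvd_of_sq_mul_eq {c d m a b : ℤ} (hd : d % 4 = 3) (hm : 2 ∣ m)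
    (h : m ^ 2 * c = a ^ 2 - d * b ^ 2) : 2 ∣ a ∧ 2 ∣ b := by
  have hm0 : (m ^ 2 : ZMod 4) = 0 := by
    obtain ⟨m, rfl⟩ := hm
    push_cast
    rw [mul_pow, show (2 ^ 2 : ZMod 4) = 0 from rfl, zero_mul]
  have hsum : (a ^ 2 + b ^ 2 : ZMod 4) = 0 := by
    rw [← sq_mul_eq_sq_add_sq_zmod_four hd h, hm0, zero_mul]
  have hdecide : ∀ x y : ZMod 4, x ^ 2 + y ^ 2 = 0 → 2 * x = 0 ∧ 2 * y = 0 := by decide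
  have htwo {n : ℤ} (hn : 2 * (n : ZMod 4) = 0) : 2 ∣ n := by
    have : (4 : ℤ) ∣ 2 * n := (ZMod.intCast_zmod_eq_zero_iff_dvd _ 4).mp (by exact_mod_cast hn)
    lia
  exact (hdecide _ _ hsum).imp htwo htwo

theorem legendreSym_eq_one_of_sq_mul_eq {p : ℕ} [Fact p.Prime] {c d m a b : ℤ} (hd : (p : ℤ) ∣ d)
    (hc : ¬ (p : ℤ) ∣ c) (hm : ¬ (p : ℤ) ∣ m) (h : m ^ 2 * c = a ^ 2 - d * b ^ 2) :
    legendreSym p c = 1 := by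
  rw [← ZMod.intCast_zmod_eq_zero_iff_dvd] at hd hc hm
  rw [legendreSym.eq_one_iff _ hc]
  have hmod := congrArg (Int.cast : ℤ → ZMod p) h
  push_cast at hmod
  refine ⟨a / m, ?_⟩
  field_simp
  linear_combination hmod - b ^ 2 * hd

theorem χ₄_eq_one_of_sq_mul_eq {c d m a b : ℤ} (hd : d % 4 = 3) (hc : ¬ 2 ∣ c) (hm : ¬ 2 ∣ m)
    (h : m ^ 2 * c = a ^ 2 - d * b ^ 2) : ZMod.χ₄ c = 1 := by
  have hm1 : (m ^ 2 : ZMod 4) = 1 := by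
    have hodd : Odd m := Int.not_even_iff_odd.mp (even_iff_two_dvd.not.mpr hm)
    have hmod := Int.sq_mod_four_eq_one_of_odd hodd
    exact_mod_cast (ZMod.intCast_eq_intCast_iff' (m ^ 2) 1 4).mpr hmod
  have hsum := sq_mul_eq_sq_add_sq_zmod_four hd h
  rw [hm1, one_mul] at hsum
  have hc0 : ZMod.χ₄ c ≠ 0 := ((isUnit_genusChar_iff Nat.prime_two).mpr hc).ne_zero
  have hdecide : ∀ x y : ZMod 4, ZMod.χ₄ (x ^ 2 + y ^ 2) ≠ 0 → ZMod.χ₄ (x ^ 2 + y ^ 2) = 1 := by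
    decide
  rw [hsum] at hc0 ⊢
  exact hdecide _ _ hc0

theorem genusChar_eq_one_of_eq_sq_sub {c d : ℤ} (hd : Odd d) (hsf : Squarefree d) {p : ℕ}
    (hp : p ∈ ramifiedPrimes d) (hc : ¬ (p : ℤ) ∣ c) {A B : ℚ} (h : (c : ℚ) = A ^ 2 - d * B ^ 2) :
    genusChar p c = 1 := by
  have hp_prime := prime_of_mem_ramifiedPrimes hp
  have hp_int := Nat.prime_iff_prime_int.mp hp_prime
  obtain ⟨m, a, b, hm, h⟩ := exists_int_sq_mul_eq_of_rat h
  obtain rfl | hp2 := eq_or_ne p 2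
  · have hd4 : d % 4 = 3 := by
      have := (mem_ramifiedPrimes hsf.ne_zero).mp hp
      grind
    obtain ⟨m, a, b, hm, h⟩ := exists_not_dvd_sq_mul_eq hp_int
      (fun _ _ _ ↦ two_dvd_and_two_dvd_of_sq_mul_eq hd4) hm h
    exact χ₄_eq_one_of_sq_mul_eq hd4 hc hm h
  · have hpd : (p : ℤ) ∣ d :=
      ((mem_ramifiedPrimes hsf.ne_zero).mp hp).elim And.right (absurd ·.1 hp2)
    have hpp : ¬ (p : ℤ) * p ∣ d := fun hpp ↦ hp_int.not_isUnit (hsf _ hpp)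
    have := Fact.mk hp_prime
    obtain ⟨m, a, b, hm, h⟩ := exists_not_dvd_sq_mul_eq hp_int
      (fun _ _ _ ↦ dvd_and_dvd_of_sq_mul_eq hp_int hpd hpp) hm h
    rw [genusChar_apply_of_ne_two hp2, ← jacobiSym.legendreSym.to_jacobiSym]
    exact legendreSym_eq_one_of_sq_mul_eq hpd hc hm h

theorem norm_quadraticAlgebra_eq_sq_sub {R : Type*} [CommRing R] (d : R)
    (z : QuadraticAlgebra R d 0) : Algebra.norm R z = z.re ^ 2 - d * z.im ^ 2 :=
  calc Algebra.norm R z = z.norm := QuadraticAlgebra.det_toLinearMap_eq_norm z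
    _ = z.re ^ 2 - d * z.im ^ 2 := by rw [QuadraticAlgebra.norm_def]; ring

theorem exists_norm_eq_sq_sub {F K : Type*} [Field F] [NeZero (2 : F)] [Field K] [Algebra F K]
    [FiniteDimensional F K] {d : F} (hd : d ≠ 0) {s : K} (hs : s ^ 2 = algebraMap F K d) (α : K) :
    ∃ A B : F, Algebra.norm F α = A ^ 2 - d * B ^ 2 := by
  by_cases hsq : IsSquare d
  · -- For `d = e²` every element is represented: `x = ((x + 1) / 2)² - ((x - 1) / 2)²`.
    obtain ⟨e, rfl⟩ := hsq
    have he : e ≠ 0 := left_ne_zero_of_mul hd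
    have h2 : (2 : F) ≠ 0 := NeZero.ne 2
    refine ⟨(Algebra.norm F α + 1) / 2, (Algebra.norm F α - 1) / (2 * e), ?_⟩
    field_simp
    ring
  have : Fact (∀ r : F, r ^ 2 ≠ d + 0 * r) :=
    ⟨fun r hr ↦ hsq ⟨r, by linear_combination -hr⟩⟩
  let φ : QuadraticAlgebra F d 0 →ₐ[F] K :=
    QuadraticAlgebra.lift ⟨s, by rw [← sq, hs, zero_smul, add_zero, Algebra.algebraMap_eq_smul_one]⟩
  let _ : Algebra (QuadraticAlgebra F d 0) K := φ.toRingHom.toAlgebra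
  have : IsScalarTower F (QuadraticAlgebra F d 0) K := .of_algHom φ
  have : FiniteDimensional (QuadraticAlgebra F d 0) K := .right F _ K
  rw [← Algebra.norm_norm (S := QuadraticAlgebra F d 0), norm_quadraticAlgebra_eq_sq_sub]
  exact ⟨_, _, rfl⟩

theorem exists_mul_mul_sq_eq_span_singleton {R : Type*} [CommRing R] [IsDedekindDomain R]
    {L L' : (Ideal R)⁰}
    (h : (ClassGroup.mk0 L)⁻¹ * ClassGroup.mk0 L' ∈ (powMonoidHom 2 : ClassGroup R →* _).range) :
    ∃ (J : (Ideal R)⁰) (α : R), (L * L' * J ^ 2 : Ideal R) = Ideal.span {α} := by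
  obtain ⟨c, hc⟩ := h
  obtain ⟨J, hJ⟩ := ClassGroup.mk0_surjective (ClassGroup.mk0 L * c)⁻¹
  have hL' : ClassGroup.mk0 L' = ClassGroup.mk0 L * c ^ 2 := eq_mul_of_inv_mul_eq hc.symm
  have hone : ClassGroup.mk0 (L * L' * J ^ 2) = 1 :=
    calc ClassGroup.mk0 (L * L' * J ^ 2)
      _ = (ClassGroup.mk0 L * c) ^ 2 * ((ClassGroup.mk0 L * c)⁻¹) ^ 2 := by
        rw [map_mul, map_mul, map_pow, hJ, hL', mul_pow, sq (ClassGroup.mk0 L)]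
        simp only [mul_assoc]
      _ = 1 := by rw [← mul_pow, mul_inv_cancel, one_pow]
  have hprin : ((L * L' * J ^ 2 : (Ideal R)⁰) : Ideal R).IsPrincipal :=
    (ClassGroup.mk0_eq_one_iff (SetLike.coe_mem _)).mp hone
  obtain ⟨α, hα⟩ := hprin.principal
  exact ⟨J, α, hα⟩

theorem exists_units_mul_absNorm_eq_sq_sub {K : Type*} [Field K] [NumberField K]
    {L L' : (Ideal (𝓞 K))⁰}
    (h : (ClassGroup.mk0 L)⁻¹ * ClassGroup.mk0 L' ∈
      (powMonoidHom 2 : ClassGroup (𝓞 K) →* _).range) :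
    ∃ u : ℤˣ, ∀ (d : ℤ) (s : K), d ≠ 0 → s ^ 2 = d → ∃ A B : ℚ,
      ((u * (Ideal.absNorm (L : Ideal (𝓞 K)) * Ideal.absNorm (L' : Ideal (𝓞 K))) : ℤ) : ℚ) =
        A ^ 2 - d * B ^ 2 := by
  obtain ⟨J, α, hα⟩ := exists_mul_mul_sq_eq_span_singleton h
  have hJ : (Ideal.absNorm (J : Ideal (𝓞 K)) : ℚ) ≠ 0 := by
    exact_mod_cast Ideal.absNorm_ne_zero_of_nonZeroDivisors J
  have hnorm := congrArg Ideal.absNorm hα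
  rw [map_mul, map_mul, map_pow, Ideal.absNorm_span_singleton] at hnorm
  obtain ⟨u, hu⟩ : ∃ u : ℤˣ, (u * (Algebra.norm ℤ α).natAbs : ℤ) = Algebra.norm ℤ α := by
    obtain h | h := (Algebra.norm ℤ α).natAbs_eq
    · exact ⟨1, by rw [Units.val_one, one_mul, ← h]⟩
    · exact ⟨-1, by rw [Units.val_neg, Units.val_one, neg_one_mul, ← h]⟩
  refine ⟨u, fun d s hd hs ↦ ?_⟩
  obtain ⟨A, B, hAB⟩ := exists_norm_eq_sq_sub (F := ℚ) (d := d) (by exact_mod_cast hd)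
    (by simpa using hs) (α : K)
  rw [← Algebra.coe_norm_int, ← hu, ← hnorm] at hAB
  refine ⟨A / Ideal.absNorm (J : Ideal (𝓞 K)), B / Ideal.absNorm (J : Ideal (𝓞 K)), ?_⟩
  push_cast at hAB ⊢
  field_simp
  linear_combination hAB

/-! ### Multiquadratic fields -/

theorem splits_minpoly_of_sq_eq {F E : Type*} [Field F] [Field E] [Algebra F E] {a : F} {x : E}
    (h : x ^ 2 = algebraMap F E a) : ((minpoly F x).map (algebraMap F E)).Splits := by
  have hfactor : (.X ^ 2 - .C a : Polynomial F).map (algebraMap F E) =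
      (.X - .C x) * (.X - .C (-x)) := by
    simp only [Polynomial.map_sub, Polynomial.map_pow, Polynomial.map_X, Polynomial.map_C, ← h,
      Polynomial.C_pow, Polynomial.C_neg]
    ring
  have hsplits : ((.X ^ 2 - .C a : Polynomial F).map (algebraMap F E)).Splits :=
    hfactor ▸ (Polynomial.Splits.X_sub_C x).mul (.X_sub_C (-x))
  refine hsplits.of_dvd ?_ (Polynomial.map_dvd _ (minpoly.dvd F x (by simp [h])))
  exact Polynomial.map_ne_zero (Polynomial.X_pow_sub_C_ne_zero two_pos a)

theorem exists_two_mul_eq_one_add {K : Type*} [Field K] [CharZero K] {x : 𝓞 K} {d : ℤ}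
    (hx : x ^ 2 = d) (hd : d % 4 = 1) : ∃ y : 𝓞 K, 2 * y = 1 + x := by
  obtain ⟨e, rfl⟩ : ∃ e, d = 4 * e + 1 := ⟨d / 4, by lia⟩
  have hx' : (x : K) ^ 2 = 4 * e + 1 := by
    rw [← map_pow, hx, map_intCast]
    push_cast
    rfl
  have hint : IsIntegral ℤ ((1 + x : K) / 2) := by
    refine ⟨.X ^ 2 - .X - Polynomial.C e, by monicity!, ?_⟩
    simp only [Polynomial.eval₂_sub, Polynomial.eval₂_pow, Polynomial.eval₂_X, Polynomial.eval₂_C,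
      algebraMap_int_eq, Int.coe_castRingHom]
    linear_combination hx' / 4
  refine ⟨⟨_, hint⟩, RingOfIntegers.ext ?_⟩
  push_cast
  exact mul_div_cancel₀ _ two_ne_zero

theorem intCast_mem_iff_dvd {R : Type*} [CommRing R] {Q : Ideal R} {p : ℤ}
    [Q.LiesOver (Ideal.span {p})] {n : ℤ} : (n : R) ∈ Q ↔ p ∣ n := by
  rw [← Ideal.mem_span_singleton, Q.mem_of_liesOver (Ideal.span {p}), eq_intCast]

theorem eq_of_sq_eq_intCast_of_sub_mem {R : Type*} [CommRing R] [NoZeroDivisors R] {p : ℕ}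
    (hp : p.Prime) (hp2 : p ≠ 2) {Q : Ideal R} [Q.LiesOver (Ideal.span {(p : ℤ)})] {d : ℤ}
    (hd : ¬ (p : ℤ) ∣ d) {x y : R} (hx : x ^ 2 = d) (hy : y ^ 2 = d) (hsub : x - y ∈ Q) :
    x = y := by
  refine (sq_eq_sq_iff_eq_or_eq_neg.mp (hx.trans hy.symm)).resolve_right fun hneg ↦ ?_
  have hmem : ((2 * d : ℤ) : R) ∈ Q := by
    convert Q.mul_mem_left (-y) hsub using 1
    push_cast
    rw [hneg, ← hy]
    ring
  obtain h2 | h := (Nat.prime_iff_prime_int.mp hp).dvd_or_dvd (intCast_mem_iff_dvd.mp hmem)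
  · exact hp2 ((Nat.prime_dvd_prime_iff_eq hp Nat.prime_two).mp (by exact_mod_cast h2))
  · exact hd h

theorem smul_sq_eq_intCast {R G : Type*} [CommRing R] [Monoid G] [MulSemiringAction G R] {d : ℤ}
    {x : R} (hx : x ^ 2 = d) (σ : G) : (σ • x) ^ 2 = d := by
  rw [← smul_pow', hx]
  exact map_intCast (MulSemiringAction.toRingHom G R σ) d

theorem smul_eq_of_mem_inertia {K G : Type*} [Field K] [CharZero K] [Group G]
    [MulSemiringAction G (𝓞 K)] {p : ℕ} (hp : p.Prime) {Q : Ideal (𝓞 K)}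
    [Q.LiesOver (Ideal.span {(p : ℤ)})] {σ : G} (hσ : σ ∈ Q.inertia G) {d : ℤ} (hd : Odd d)
    (hpd : p ∉ ramifiedPrimes d) {x : 𝓞 K} (hx : x ^ 2 = d) : σ • x = x := by
  have hd0 : d ≠ 0 := fun h ↦ Int.not_odd_zero (h ▸ hd)
  rw [mem_ramifiedPrimes hd0] at hpd
  have hpd' : ¬ (p : ℤ) ∣ d := fun h ↦ hpd (.inl ⟨hp, h⟩)
  have hσx := smul_sq_eq_intCast hx σ
  obtain hp2 | rfl := ne_or_eq p 2
  · exact eq_of_sq_eq_intCast_of_sub_mem hp hp2 hpd' hσx hx (hσ x)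
  refine (sq_eq_sq_iff_eq_or_eq_neg.mp (hσx.trans hx.symm)).resolve_right fun hneg ↦ hpd' ?_
  -- Here `d ≡ 1 mod 4`, so `y = (1 + x) / 2` is integral, and `σ y - y = -x` would lie in `Q`.
  obtain ⟨y, hy⟩ := exists_two_mul_eq_one_add hx (by grind)
  have hσy : 2 * (σ • y) = 1 + σ • x := by
    simpa [two_mul, smul_add, smul_one] using congrArg (σ • ·) hy
  have hsub : σ • y - y = -x := mul_left_cancel₀ (two_ne_zero (α := 𝓞 K)) (by grind)
  have hxQ : x ∈ Q := neg_mem_iff.mp (hsub ▸ hσ y)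
  have hdQ : (d : 𝓞 K) ∈ Q := hx ▸ Q.pow_mem_of_mem hxQ 2 two_pos
  exact intCast_mem_iff_dvd.mp hdQ

theorem natCard_eq_of_forall_pow_eq_self {F : Type*} [Field F] {p : ℕ} [Fact p.Prime]
    [CharP F p] (h : ∀ x : F, x ^ p = x) : Nat.card F = p := by
  have htop : (⊥ : Subfield F) = ⊤ :=
    top_unique fun x _ ↦ (Subfield.mem_bot_iff_pow_eq_self F p).mpr (h x)
  rw [← Subfield.card_bot F p, htop]
  exact (Nat.card_congr Subfield.topEquiv.toEquiv).symm

theorem natCard_quotient_under {R : Type*} [CommRing R] (Q : Ideal R) (l : ℕ)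
    [hQ : Q.LiesOver (Ideal.span {(l : ℤ)})] : Nat.card (ℤ ⧸ Q.under ℤ) = l := by
  rw [← hQ.over, Nat.card_congr (Int.quotientSpanNatEquivZMod l).toEquiv, Nat.card_zmod]

theorem charP_quotient_of_liesOver {R : Type*} [CommRing R] (Q : Ideal R) (l : ℕ)
    [Q.LiesOver (Ideal.span {(l : ℤ)})] : CharP (R ⧸ Q) l where
  cast_eq_zero_iff n := by
    rw [← map_natCast (Ideal.Quotient.mk Q), Ideal.Quotient.eq_zero_iff_mem, ← Int.cast_natCast,
      intCast_mem_iff_dvd (p := (l : ℤ)), Int.natCast_dvd_natCast]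

theorem smul_eq_of_isArithFrobAt {R G : Type*} [CommRing R] [NoZeroDivisors R] [Group G]
    [MulSemiringAction G R] {l : ℕ} [Fact l.Prime] (hl2 : l ≠ 2) {Q : Ideal R}
    [Q.LiesOver (Ideal.span {(l : ℤ)})] {σ : G} (hσ : IsArithFrobAt ℤ σ Q) {d : ℤ}
    (hd : legendreSym l d = 1) {x : R} (hx : x ^ 2 = d) : σ • x = x := by
  have hl : l.Prime := Fact.out
  have hld : ¬ (l : ℤ) ∣ d := by
    rw [← ZMod.intCast_zmod_eq_zero_iff_dvd, ← legendreSym.eq_zero_iff, hd]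
    exact one_ne_zero
  have hEuler : (l : ℤ) ∣ d ^ (l / 2) - 1 := by
    rw [← ZMod.intCast_zmod_eq_zero_iff_dvd]
    push_cast
    rw [← legendreSym.eq_pow, hd, Int.cast_one, sub_self]
  have hpow : x ^ l - x ∈ Q := by
    have hxl : x ^ l = (d : R) ^ (l / 2) * x := by
      rw [← hx, ← pow_mul, ← pow_succ, Nat.two_mul_div_two_add_one_of_odd (hl.odd_of_ne_two hl2)]
    rw [hxl, ← sub_one_mul]
    exact Q.mul_mem_right x (by exact_mod_cast intCast_mem_iff_dvd.mpr hEuler)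
  have hfrob : σ • x - x ^ l ∈ Q := natCard_quotient_under Q l ▸ hσ x
  exact eq_of_sq_eq_intCast_of_sub_mem hl hl2 hld (smul_sq_eq_intCast hx σ) hx
    (by simpa using add_mem hfrob hpow)

/-- The field `K` is multiquadratic: it is generated over `ℚ` by the family `s`, where `s i` is a
square root of the integer `d i`. -/
structure IsMultiquadratic {K ι : Type*} [Field K] [CharZero K] (d : ι → ℤ) (s : ι → K) : Prop where
  sq_eq : ∀ i, s i ^ 2 = d i
  adjoin_eq_top : IntermediateField.adjoin ℚ (Set.range s) = ⊤

/-- The primes that ramify in one of the quadratic fields `ℚ(√dᵢ)`. -/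
def ramifiedPrimesUnion {ι : Type*} [Fintype ι] (d : ι → ℤ) : Finset ℕ :=
  Finset.univ.biUnion fun i ↦ ramifiedPrimes (d i)

theorem mem_ramifiedPrimesUnion {ι : Type*} [Fintype ι] {d : ι → ℤ} {p : ℕ} :
    p ∈ ramifiedPrimesUnion d ↔ ∃ i, p ∈ ramifiedPrimes (d i) := by
  simp [ramifiedPrimesUnion]

theorem prime_of_mem_ramifiedPrimesUnion {ι : Type*} [Fintype ι] {d : ι → ℤ} {p : ℕ}
    (hp : p ∈ ramifiedPrimesUnion d) : p.Prime := by
  obtain ⟨i, hi⟩ := mem_ramifiedPrimesUnion.mp hp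
  exact prime_of_mem_ramifiedPrimes hi

/-- The homomorphism sending a vector of signs `v p` to the products of the `v p` over the primes
that ramify in `ℚ(√dᵢ)`, one product for each `i`. By reciprocity, an odd prime whose genus
characters are the `v p` splits completely exactly when `v` lies in the kernel. -/
def genusRelation {ι : Type*} [Fintype ι] (d : ι → ℤ) :
    (ramifiedPrimesUnion d → ℤˣ) →* (ι → ℤˣ) :=
  MonoidHom.pi fun i ↦ ∏ q : ramifiedPrimes (d i),
    Pi.evalMonoidHom (fun _ ↦ ℤˣ) ⟨q, mem_ramifiedPrimesUnion.mpr ⟨i, q.2⟩⟩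

/-- The vector of values of the genus characters at `±1`. -/
def genusSigns (P : Finset ℕ) : ℤˣ →* (P → ℤˣ) :=
  MonoidHom.pi fun p ↦ Units.map (genusChar p)

theorem jacobiSym_eq_genusRelation {ι : Type*} [Fintype ι] {d : ι → ℤ}
    {v : ramifiedPrimesUnion d → ℤˣ} {l : ℕ} (hl : Odd l)
    (hv : ∀ p : ramifiedPrimesUnion d, genusChar p l = v p) {i : ι} (hodd : Odd (d i))
    (hsf : Squarefree (d i)) : J(d i | l) = genusRelation d v i := by
  rw [jacobiSym_eq_prod_genusChar hodd hsf hl, ← Finset.prod_coe_sort]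
  simp [genusRelation, ← hv]

namespace IsMultiquadratic

variable {K ι : Type*} [Field K] {d : ι → ℤ} {s : ι → K}

section CharZero

variable [CharZero K] (h : IsMultiquadratic d s)
include h

theorem isIntegral (i : ι) : IsIntegral ℤ (s i) :=
  .of_pow two_pos (by rw [h.sq_eq]; exact isIntegral_algebraMap (R := ℤ))

theorem eq_one_of_forall_apply_eq {σ : Gal(K/ℚ)} (hσ : ∀ i, σ (s i) = s i) : σ = 1 := by
  have hfix := (IntermediateField.forall_mem_adjoin_smul_eq_self_iff ℚ (S := Set.range s) σ).mpr
    (by simpa using hσ)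
  rw [h.adjoin_eq_top] at hfix
  exact AlgEquiv.ext fun x ↦ hfix x IntermediateField.mem_top

theorem exists_ringOfIntegers_sq_eq (i : ι) : ∃ x : 𝓞 K, (x : K) = s i ∧ x ^ 2 = d i := by
  obtain ⟨x, hx⟩ := (IsIntegralClosure.isIntegral_iff (A := 𝓞 K)).mp (h.isIntegral i)
  refine ⟨x, hx, RingOfIntegers.coe_injective ?_⟩
  rw [map_pow, hx, map_intCast, h.sq_eq]

end CharZero

section NumberField

variable [NumberField K] (h : IsMultiquadratic d s)
include h

theorem isGalois : IsGalois ℚ K where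
  to_normal := by
    refine normal_iff.mpr fun x ↦ ⟨.of_finite ℚ x, ?_⟩
    refine IntermediateField.splits_of_mem_adjoin ℚ K (S := Set.range s) ?_
      (h.adjoin_eq_top ▸ IntermediateField.mem_top)
    rintro _ ⟨i, rfl⟩
    exact ⟨.of_finite ℚ _, splits_minpoly_of_sq_eq (a := (d i : ℚ)) (by simp [h.sq_eq])⟩

theorem inertia_eq_bot (hodd : ∀ i, Odd (d i)) {p : ℕ} (hp : p.Prime)
    (hpd : ∀ i, p ∉ ramifiedPrimes (d i)) (Q : Ideal (𝓞 K))
    [Q.LiesOver (Ideal.span {(p : ℤ)})] : Q.inertia Gal(K/ℚ) = ⊥ := by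
  refine (Subgroup.eq_bot_iff_forall _).mpr fun σ hσ ↦ h.eq_one_of_forall_apply_eq fun i ↦ ?_
  obtain ⟨x, hxs, hx⟩ := h.exists_ringOfIntegers_sq_eq i
  rw [← hxs, ← AlgEquiv.smul_def, ← algebraMap.coe_smul',
    smul_eq_of_mem_inertia hp hσ (hodd i) (hpd i) hx]

theorem not_dvd_discr (hodd : ∀ i, Odd (d i)) {p : ℕ} (hp : p.Prime)
    (hpd : ∀ i, p ∉ ramifiedPrimes (d i)) : ¬ (p : ℤ) ∣ discr K := by
  have := h.isGalois
  have hp_int := Nat.prime_iff_prime_int.mp hp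
  have := (Ideal.span_singleton_prime hp_int.ne_zero).mpr hp_int
  refine (not_dvd_discr_iff_forall_liesOver K (𝓞 K) hp_int).mpr fun Q _ _ ↦ ?_
  rw [← Ideal.ramificationIdx_eq_one_iff,
    ← Ideal.ramificationIdxIn_eq_ramificationIdx (Ideal.span {(p : ℤ)}) Q Gal(K/ℚ),
    ← Ideal.card_inertia_eq_ramificationIdxIn (G := Gal(K/ℚ)) _ Q,
    h.inertia_eq_bot hodd hp hpd Q, Subgroup.card_bot]

theorem exists_absNorm_eq {l : ℕ} [Fact l.Prime] (hl2 : l ≠ 2)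
    (hd : ∀ i, legendreSym l (d i) = 1) : ∃ L : Ideal (𝓞 K), Ideal.absNorm L = l := by
  have := h.isGalois
  have hl_int := Nat.prime_iff_prime_int.mp (Fact.out : l.Prime)
  have := (Ideal.span_singleton_prime hl_int.ne_zero).mpr hl_int
  have hbot : Ideal.span {(l : ℤ)} ≠ ⊥ := Ideal.span_singleton_eq_bot.not.mpr hl_int.ne_zero
  have := this.isMaximal hbot
  obtain ⟨Q, _, _⟩ := Ideal.exists_maximal_ideal_liesOver_of_isIntegral (S := 𝓞 K)
    (Ideal.span {(l : ℤ)})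
  let _ := Ideal.Quotient.field Q
  have := charP_quotient_of_liesOver Q l
  -- The Frobenius at `Q` fixes every `s i`, so it is trivial and `𝓞 K ⧸ Q` is the prime field.
  obtain ⟨σ, hσ⟩ := IsArithFrobAt.exists_of_isInvariant ℤ Gal(K/ℚ) Q
  obtain rfl : σ = 1 := h.eq_one_of_forall_apply_eq fun i ↦ by
    obtain ⟨x, hxs, hx⟩ := h.exists_ringOfIntegers_sq_eq i
    rw [← hxs, ← AlgEquiv.smul_def, ← algebraMap.coe_smul',
      smul_eq_of_isArithFrobAt hl2 hσ (hd i) hx]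
  refine ⟨Q, (natCard_eq_of_forall_pow_eq_self (F := 𝓞 K ⧸ Q) fun y ↦ ?_)⟩
  obtain ⟨x, rfl⟩ := Ideal.Quotient.mk_surjective y
  rw [← natCard_quotient_under Q l]
  exact (hσ.mk_apply x).symm

variable [Fintype ι]

theorem primeFactors_discr_subset (hodd : ∀ i, Odd (d i)) :
    (discr K).natAbs.primeFactors ⊆ ramifiedPrimesUnion d := by
  intro p hp
  by_contra hpd
  rw [mem_ramifiedPrimesUnion, not_exists] at hpd
  exact h.not_dvd_discr hodd (Nat.prime_of_mem_primeFactors hp) hpd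
    (Int.natCast_dvd.mpr (Nat.dvd_of_mem_primeFactors hp))

theorem exists_forall_genusChar_absNorm_eq (hodd : ∀ i, Odd (d i)) (hsf : ∀ i, Squarefree (d i))
    {v : ramifiedPrimesUnion d → ℤˣ} (hv : v ∈ (genusRelation d).ker) :
    ∃ L : (Ideal (𝓞 K))⁰, ∀ p : ramifiedPrimesUnion d,
      genusChar p (Ideal.absNorm (L : Ideal (𝓞 K))) = v p := by
  obtain ⟨l, hl2, hl, hlv⟩ := exists_prime_gt_forall_genusChar_eq
    (p := ((↑) : ramifiedPrimesUnion d → ℕ)) (fun p ↦ prime_of_mem_ramifiedPrimesUnion p.2)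
    Subtype.val_injective v 2
  have := Fact.mk hl
  obtain ⟨L, hL⟩ := h.exists_absNorm_eq hl2.ne' fun i ↦ by
    rw [jacobiSym.legendreSym.to_jacobiSym,
      jacobiSym_eq_genusRelation (hl.odd_of_ne_two hl2.ne') hlv (hodd i) (hsf i), hv, Pi.one_apply,
      Units.val_one]
  have hL0 : L ≠ ⊥ := fun hL0 ↦ hl.ne_zero (by rw [← hL, hL0, Ideal.absNorm_bot])
  exact ⟨⟨L, mem_nonZeroDivisors_of_ne_zero hL0⟩, fun p ↦ by rw [hL, hlv p]⟩

theorem inv_mul_mem_range_genusSigns (hodd : ∀ i, Odd (d i)) (hsf : ∀ i, Squarefree (d i))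
    {L L' : (Ideal (𝓞 K))⁰} {v w : ramifiedPrimesUnion d → ℤˣ}
    (hv : ∀ p : ramifiedPrimesUnion d, genusChar p (Ideal.absNorm (L : Ideal (𝓞 K))) = v p)
    (hw : ∀ p : ramifiedPrimesUnion d, genusChar p (Ideal.absNorm (L' : Ideal (𝓞 K))) = w p)
    (hL : (ClassGroup.mk0 L)⁻¹ * ClassGroup.mk0 L' ∈
      (powMonoidHom 2 : ClassGroup (𝓞 K) →* _).range) :
    v⁻¹ * w ∈ (genusSigns (ramifiedPrimesUnion d)).range := by
  obtain ⟨u, hu⟩ := exists_units_mul_absNorm_eq_sq_sub hL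
  refine ⟨u, funext fun p ↦ ?_⟩
  obtain ⟨i, hpi⟩ := mem_ramifiedPrimesUnion.mp p.2
  obtain ⟨A, B, hAB⟩ := hu (d i) (s i) (hsf i).ne_zero (h.sq_eq i)
  have hprod : genusChar p (u * (Ideal.absNorm (L : Ideal (𝓞 K)) *
      Ideal.absNorm (L' : Ideal (𝓞 K)))) = (genusSigns _ u p * (v p * w p) : ℤˣ) := by
    rw [map_mul, map_mul, hv, hw]
    rfl
  have hone : genusSigns _ u p * (v p * w p) = 1 := by
    refine Units.ext (hprod.symm.trans ?_)
    exact genusChar_eq_one_of_eq_sq_sub (hodd i) (hsf i) hpi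
      ((isUnit_genusChar_iff (prime_of_mem_ramifiedPrimes hpi)).mp (hprod ▸ Units.isUnit _)) hAB
  rw [eq_inv_of_mul_eq_one_left hone, mul_inv, Int.units_inv_eq_self (w p), Pi.mul_apply,
    Pi.inv_apply]

theorem two_pow_card_le_index_range_powMonoidHom (hodd : ∀ i, Odd (d i))
    (hsf : ∀ i, Squarefree (d i)) :
    2 ^ ((ramifiedPrimesUnion d).card - (Fintype.card ι + 1)) ≤
      (powMonoidHom 2 : ClassGroup (𝓞 K) →* _).range.index := by
  choose L hL using fun v : (genusRelation d).ker ↦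
    h.exists_forall_genusChar_absNorm_eq hodd hsf v.2
  have hker : Nat.card (genusRelation d).ker ≤
      (powMonoidHom 2 : ClassGroup (𝓞 K) →* _).range.index *
        Nat.card (genusSigns (ramifiedPrimesUnion d)).range :=
    card_le_card_mul_card_of_inv_mul_mem
      (f := fun v ↦ (ClassGroup.mk0 (L v) : ClassGroup (𝓞 K) ⧸ (powMonoidHom 2).range))
      Subtype.val_injective fun v w hvw ↦
        h.inv_mul_mem_range_genusSigns hodd hsf (hL v) (hL w) (QuotientGroup.eq.mp hvw)
  have hsigns : Nat.card (genusSigns (ramifiedPrimesUnion d)).range ≤ 2 := by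
    simpa using Nat.card_le_card_of_surjective _
      (genusSigns (ramifiedPrimesUnion d)).rangeRestrict_surjective
  have hcard := card_le_card_ker_mul_card (genusRelation d)
  rw [Nat.card_fun, Nat.card_fun, Nat.card_eq_fintype_card (α := ℤˣ), Fintype.card_units_int,
    Nat.card_eq_finsetCard, Nat.card_eq_fintype_card (α := ι)] at hcard
  obtain hle | hle := le_total (ramifiedPrimesUnion d).card (Fintype.card ι + 1)
  · rw [Nat.sub_eq_zero_of_le hle, pow_zero]
    exact Nat.one_le_iff_ne_zero.mpr Subgroup.FiniteIndex.index_ne_zero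
  · refine Nat.le_of_mul_le_mul_right ?_ (show 0 < 2 ^ (Fintype.card ι + 1) by positivity)
    rw [← pow_add, Nat.sub_add_cancel hle, pow_succ', ← mul_assoc]
    exact hcard.trans (Nat.mul_le_mul_right _ (hker.trans (Nat.mul_le_mul_left _ hsigns)))

end NumberField

end IsMultiquadratic

theorem stmt5_general {K ι : Type*} [Field K] [NumberField K] [Fintype ι] {d : ι → ℤ} {s : ι → K}
    (h : IsMultiquadratic d s) (hodd : ∀ i, Odd (d i)) (hsf : ∀ i, Squarefree (d i)) :
    ∃ f : Multiplicative
        (Fin ((discr K).natAbs.primeFactors.card - (Fintype.card ι + 1)) → ZMod 2) →*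
        ClassGroup (𝓞 K),
      Function.Injective f := by
  refine exists_injective_hom_of_pow_le_index_range_powMonoidHom
    ((Nat.pow_le_pow_right two_pos ?_).trans (h.two_pow_card_le_index_range_powMonoidHom hodd hsf))
  exact Nat.sub_le_sub_right (Finset.card_le_card (h.primeFactors_discr_subset hodd)) _

theorem adjoin_setOf_sq_eq_or_sq_eq {F E : Type*} [Field F] [Field E] [Algebra F E] {a b x y : E}
    (hx : x ^ 2 = a) (hy : y ^ 2 = b) :
    adjoin F {z : E | z ^ 2 = a ∨ z ^ 2 = b} = adjoin F {x, y} := by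
  refine le_antisymm (adjoin_le_iff.mpr ?_) (adjoin.mono F _ _ ?_)
  · have hmem {z w : E} (hw : w ∈ adjoin F {x, y}) (h : z ^ 2 = w ^ 2) : z ∈ adjoin F {x, y} := by
      obtain rfl | rfl := sq_eq_sq_iff_eq_or_eq_neg.mp h
      exacts [hw, neg_mem hw]
    have hxm : x ∈ adjoin F {x, y} := subset_adjoin F _ (.inl rfl)
    have hym : y ∈ adjoin F {x, y} := subset_adjoin F _ (.inr rfl)
    rintro z (hz | hz)
    exacts [hmem hxm (hz.trans hx.symm), hmem hym (hz.trans hy.symm)]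
  · rintro z (rfl | rfl)
    exacts [.inl hx, .inr hy]

theorem exists_isMultiquadratic_biquad (d₁ d₂ : ℤ) :
    ∃ s : Fin 2 → biquad d₁ d₂, IsMultiquadratic ![d₁, d₂] s := by
  obtain ⟨x, hx⟩ := IsAlgClosed.exists_pow_nat_eq (d₁ : ℂ) two_pos
  obtain ⟨y, hy⟩ := IsAlgClosed.exists_pow_nat_eq (d₂ : ℂ) two_pos
  have hxm : x ∈ biquad d₁ d₂ := subset_adjoin ℚ _ (.inl hx)
  have hym : y ∈ biquad d₁ d₂ := subset_adjoin ℚ _ (.inr hy)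
  refine ⟨![⟨x, hxm⟩, ⟨y, hym⟩], Fin.forall_fin_two.mpr ⟨Subtype.ext hx, Subtype.ext hy⟩, ?_⟩
  -- Two `ℚ`-algebra structures are in play: that of a field of characteristic zero, used by
  -- `IsMultiquadratic`, and that of a subfield of `ℂ`, used by `lift`.
  have hinst : (DivisionRing.toRatAlgebra : Algebra ℚ (biquad d₁ d₂)) = (biquad d₁ d₂).algebra' :=
    Subsingleton.elim _ _
  rw [hinst, ← lift_inj, lift_top, lift_adjoin, Matrix.range_cons_cons_empty, Set.image_pair]
  exact (adjoin_setOf_sq_eq_or_sq_eq hx hy).symm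

theorem stmt5 (d₁ d₂ : ℤ) (hsf₁ : Squarefree d₁) (hsf₂ : Squarefree d₂)
    (hodd₁ : Odd d₁) (hodd₂ : Odd d₂) (hpos₁ : 0 < d₁) (hpos₂ : 0 < d₂)
    (hne : d₁ ≠ d₂) (h1 : d₁ ≠ 1) (h2 : d₂ ≠ 1) (hnsq : ¬ IsSquare (d₁ * d₂))
    [NumberField (biquad d₁ d₂)]
    (hdeg : Module.finrank ℚ (biquad d₁ d₂) = 4)
    (homega : 3 ≤ (NumberField.discr (biquad d₁ d₂)).natAbs.primeFactors.card) :
    ∃ f : Multiplicative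
        (Fin ((NumberField.discr (biquad d₁ d₂)).natAbs.primeFactors.card - 3) → ZMod 2) →*
        ClassGroup (𝓞 (biquad d₁ d₂)),
      Function.Injective f := by
  obtain ⟨s, h⟩ := exists_isMultiquadratic_biquad d₁ d₂
  exact stmt5_general h (Fin.forall_fin_two.mpr ⟨hodd₁, hodd₂⟩)
    (Fin.forall_fin_two.mpr ⟨hsf₁, hsf₂⟩)
end
end
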